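/- Let T > 0 and x be reals with T/3 < x < 2T/3, and let f : ℝ → Bool be the clock signal with period T and high time x, i.e. f(t) = true iff t − T·⌊t/T⌋ ∈ [0, x). Define g(t) = ¬(f(t) ∧ ¬f(t − T/3)) and out(t) = ¬(g(t) ∧ g(t − T/6)). Then out is periodic with period T and is true exactly on [0, T/2) modulo T, i.e. out(t) = true iff t − T·⌊t/T⌋ ∈ [0, T/2). In particular the output clock has high time T/2 and low time T/2, and each output pulse begins at the same time as the corresponding input pulse. -/

import Mathlib

/-!
Modulo the period, the first NAND is low exactly when its input is high but was low one delay `d`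
earlier. As the input is high for at least `d` and low for at least `d`, that is the first `d` time
units of each period. By De Morgan, the second NAND superposes these pulses with their copies
delayed by `e ≤ d`; no gap opens between the two, so the output is high for `d + e`. The theorem is
the case `d = T / 3`, `e = T / 6`.
-/

section Residue

variable {α : Type*} [AddCommGroup α] [LinearOrder α] [IsOrderedAddMonoid α] [Archimedean α]
  {p a b c : α}

theorem toIcoMod_sub_of_add_le_toIcoMod (hp : 0 < p) (hc : 0 ≤ c) (h : a + c ≤ toIcoMod hp a b) :
    toIcoMod hp a (b - c) = toIcoMod hp a b - c := by
  refine (toIcoMod_eq_iff hp).2 ⟨⟨le_sub_iff_add_le.2 h, ?_⟩, toIcoDiv hp a b, ?_⟩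
  · exact (sub_le_self _ hc).trans_lt (toIcoMod_lt_right hp a b)
  · rw [sub_add_eq_add_sub, toIcoMod_add_toIcoDiv_zsmul]

theorem toIcoMod_sub_of_toIcoMod_lt_add (hp : 0 < p) (hc : c ≤ p) (h : toIcoMod hp a b < a + c) :
    toIcoMod hp a (b - c) = toIcoMod hp a b - c + p := by
  have hleft : a ≤ toIcoMod hp a b := left_le_toIcoMod hp a b
  refine (toIcoMod_eq_iff hp).2 ⟨⟨?_, ?_⟩, toIcoDiv hp a b - 1, ?_⟩
  · rw [sub_add_eq_add_sub, le_sub_iff_add_le]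
    exact add_le_add hleft hc
  · exact add_lt_add_left (sub_lt_iff_lt_add.2 h) p
  · calc
      b - c = toIcoMod hp a b + toIcoDiv hp a b • p - c := by rw [toIcoMod_add_toIcoDiv_zsmul]
      _ = toIcoMod hp a b - c + p + (toIcoDiv hp a b - 1) • p := by rw [sub_one_zsmul]; abel

end Residue

theorem toIcoMod_zero_eq_sub_mul_floor {K : Type*} [Field K] [LinearOrder K]
    [IsStrictOrderedRing K] [FloorRing K] {p : K} (hp : 0 < p) (b : K) :
    toIcoMod hp 0 b = b - p * ⌊b / p⌋ := by
  rw [toIcoMod, toIcoDiv_eq_floor, sub_zero, zsmul_eq_mul, mul_comm]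

section Clock

variable {α : Type*} [AddCommGroup α] [LinearOrder α] [IsOrderedAddMonoid α] [Archimedean α]
  {T x d e : α} {hT : 0 < T} {f g out : α → Bool}

/-- `f` is the clock with period `T` and high time `x`: it is true exactly on `[0, x)` modulo `T`.
The bounds `0 < x < T` are not built in; outside them `f` is constant. -/
def IsClock (hT : 0 < T) (x : α) (f : α → Bool) : Prop :=
  ∀ t, f t = true ↔ toIcoMod hT 0 t < x

theorem IsClock.periodic (hf : IsClock hT x f) : Function.Periodic f T := fun t => by
  rw [Bool.eq_iff_iff, hf, hf, toIcoMod_add_right]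

theorem IsClock.and_not_delay (hf : IsClock hT x f) (hd : 0 ≤ d) (hdx : d ≤ x)
    (hxd : x + d ≤ T) : IsClock hT d fun t => f t && !f (t - d) := fun t => by
  have hr : 0 ≤ toIcoMod hT 0 t := left_le_toIcoMod hT 0 t
  rw [Bool.and_eq_true, Bool.not_eq_true', ← Bool.not_eq_true, hf, hf, not_lt]
  obtain hdr | hrd := le_or_gt d (toIcoMod hT 0 t)
  · rw [toIcoMod_sub_of_add_le_toIcoMod hT hd (by rwa [zero_add])]
    refine iff_of_false ?_ hdr.not_gt
    rintro ⟨hrx, hxr⟩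
    exact (hxr.trans (sub_le_self _ hd)).not_gt hrx
  · have hdT : d ≤ T := (le_add_of_nonneg_left (hd.trans hdx)).trans hxd
    rw [toIcoMod_sub_of_toIcoMod_lt_add hT hdT (by rwa [zero_add])]
    refine iff_of_true ⟨hrd.trans_le hdx, ?_⟩ hrd
    calc
      x ≤ T - d := le_sub_iff_add_le.2 hxd
      _ ≤ toIcoMod hT 0 t + (T - d) := le_add_of_nonneg_left hr
      _ = toIcoMod hT 0 t - d + T := by abel

theorem IsClock.or_delay (hf : IsClock hT x f) (he : 0 ≤ e) (hex : e ≤ x) :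
    IsClock hT (x + e) fun t => f t || f (t - e) := fun t => by
  rw [Bool.or_eq_true, hf, hf]
  obtain her | hre := le_or_gt e (toIcoMod hT 0 t)
  · rw [toIcoMod_sub_of_add_le_toIcoMod hT he (by rwa [zero_add]), sub_lt_iff_lt_add]
    exact or_iff_right_of_imp fun hrx => hrx.trans_le (le_add_of_nonneg_right he)
  · have hrx : toIcoMod hT 0 t < x := hre.trans_le hex
    exact iff_of_true (Or.inl hrx) (hrx.trans_le (le_add_of_nonneg_right he))

theorem pulse_shaper_correct_general (hf : IsClock hT x f) (he : 0 ≤ e) (hed : e ≤ d)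
    (hdx : d ≤ x) (hxd : x + d ≤ T) (hg : ∀ t, g t = !(f t && !f (t - d)))
    (hout : ∀ t, out t = !(g t && g (t - e))) : IsClock hT (d + e) out := by
  have hd : 0 ≤ d := he.trans hed
  have hpulse : IsClock hT d fun t => !g t := by
    simpa only [hg, Bool.not_not] using hf.and_not_delay hd hdx hxd
  simpa only [← Bool.not_and, ← hout] using hpulse.or_delay he hed

end Clock

theorem isClock_iff_sub_mul_floor_mem_Ico {K : Type*} [Field K] [LinearOrder K]
    [IsStrictOrderedRing K] [FloorRing K] {T x : K} (hT : 0 < T) {f : K → Bool} :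
    IsClock hT x f ↔ ∀ t, f t = true ↔ t - T * ⌊t / T⌋ ∈ Set.Ico 0 x := by
  simp only [IsClock, ← toIcoMod_zero_eq_sub_mul_floor hT, Set.mem_Ico, left_le_toIcoMod,
    true_and]

/-- correct behavior of the two-stage pulse shaper with ideal
delays, for input high time `T/3 < x < 2T/3`: the output is periodic with
period `T` and high exactly on `[0, T/2)` modulo `T`. -/
theorem pulse_shaper_correct
    (T x : ℝ) (hT : 0 < T) (hx1 : T / 3 < x) (hx2 : x < 2 * T / 3)
    (f : ℝ → Bool)
    (hf : ∀ t : ℝ, f t = true ↔ t - T * (⌊t / T⌋ : ℝ) ∈ Set.Ico (0 : ℝ) x)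
    (g out : ℝ → Bool)
    (hg : ∀ t : ℝ, g t = !(f t && !(f (t - T / 3))))
    (hout : ∀ t : ℝ, out t = !(g t && g (t - T / 6))) :
    (∀ t : ℝ, out (t + T) = out t) ∧
    (∀ t : ℝ, out t = true ↔ t - T * (⌊t / T⌋ : ℝ) ∈ Set.Ico (0 : ℝ) (T / 2)) := by
  have hclock : IsClock hT (T / 3 + T / 6) out :=
    pulse_shaper_correct_general ((isClock_iff_sub_mul_floor_mem_Ico hT).2 hf)
      (by linarith) (by linarith) hx1.le (by linarith) hg hout
  rw [show T / 3 + T / 6 = T / 2 by ring] at hclock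
  exact ⟨hclock.periodic, (isClock_iff_sub_mul_floor_mem_Ico hT).1 hclock⟩
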